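/- arXiv:1502.00567 — 3 statements merged into one kernel-verified Lean document; each statement's English description precedes it below -/
import Mathlib

section
/- Let μ > 0, b ≥ 0, C₀ ≥ 0 and δ ∈ (1/2, 1), and let f = (f^1,…,f^M) : ℝ → ℝ^M be a function with |f^k(t)| ≤ C₀ + |t|^δ for all t ∈ ℝ and all k. Then for every s ∈ ℝ the quantity C(s) := sup_{t∈ℝ} exp(−(μ/2)|t| + b Σ_{k=1}^M |f^k(t+s) − f^k(s)|) is finite, and lim_{s→±∞} |s|^{−1} log⁺ C(s) = 0. -/
/-!
Subadditivity of `x ↦ x ^ δ` on `[0, ∞)` bounds the exponent by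
`-(μ/2)|t| + bM(2C₀ + |t|^δ + 2|s|^δ)`. As `δ < 1`, the linear term absorbs `bM|t|^δ` up to a
constant (`exists_rpow_sub_linear_le`), so the exponent is at most `K + B|s|^δ` uniformly in `t`
(`exists_exponent_le`). Hence `C(s)` is finite and `log⁺ C(s) ≤ K + B|s|^δ`, which is `o(|s|)`
(`tendsto_logPlus_iSup_exp_div`).
-/

open Filter
open scoped Topology

noncomputable section

/-- Since `δ < 1`, the linear term dominates: `B x^δ - c x` is bounded above on `[0, ∞)`. -/
lemma exists_rpow_sub_linear_le (B c δ : ℝ) (hB : 0 ≤ B) (hc : 0 < c) (hδ0 : 0 < δ)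
    (hδ1 : δ < 1) : ∃ K : ℝ, 0 ≤ K ∧ ∀ x : ℝ, 0 ≤ x → B * x ^ δ - c * x ≤ K := by
  have hlim : Tendsto (fun x : ℝ => B * x ^ (-(1 - δ))) atTop (𝓝 0) := by
    simpa using (tendsto_rpow_neg_atTop (sub_pos.2 hδ1)).const_mul B
  obtain ⟨X, hX⟩ := eventually_atTop.1 (hlim.eventually (gt_mem_nhds hc))
  refine ⟨B * (max X 1) ^ δ, by positivity, fun x hx => ?_⟩
  rcases le_total x (max X 1) with h | h
  · have h1 : B * x ^ δ ≤ B * (max X 1) ^ δ := by gcongr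
    nlinarith
  · have hx0 : 0 < x := lt_of_lt_of_le (by positivity) h
    have h1 := hX x ((le_max_left _ _).trans h)
    have h2 : x ^ δ = x ^ (-(1 - δ)) * x := by
      rw [← Real.rpow_add_one hx0.ne']; congr 1; ring
    have h3 : B * x ^ δ ≤ c * x := by
      rw [h2, ← mul_assoc]; gcongr
    have h4 : 0 ≤ B * (max X 1) ^ δ := by positivity
    linarith

/-- A bound on the exponent that is uniform in `t` and grows only like `|s| ^ δ`. -/
lemma exists_exponent_le {M : ℕ} (μ b C₀ δ : ℝ) (hμ : 0 < μ) (hb : 0 ≤ b) (hC₀ : 0 ≤ C₀)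
    (hδ : δ ∈ Set.Ioo (1 / 2 : ℝ) 1) (f : Fin M → ℝ → ℝ)
    (hf : ∀ k, ∀ t : ℝ, |f k t| ≤ C₀ + |t| ^ δ) :
    ∃ K B : ℝ, 0 ≤ K ∧ 0 ≤ B ∧ ∀ s t : ℝ,
      -(μ / 2) * |t| + b * ∑ k, |f k (t + s) - f k s| ≤ K + B * |s| ^ δ := by
  obtain ⟨hδ0, hδ1⟩ := hδ
  have hδ0 : 0 < δ := by linarith
  obtain ⟨K, hK, hKx⟩ := exists_rpow_sub_linear_le (b * M) (μ / 2) δ (by positivity)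
    (by positivity) hδ0 hδ1
  refine ⟨K + b * M * (2 * C₀), b * M * 2, by positivity, by positivity, fun s t => ?_⟩
  have hts : |t + s| ^ δ ≤ |t| ^ δ + |s| ^ δ :=
    (Real.rpow_le_rpow (abs_nonneg _) (abs_add_le t s) hδ0.le).trans
      (Real.rpow_add_le_add_rpow (abs_nonneg _) (abs_nonneg _) hδ0.le hδ1.le)
  have hsum : ∑ k, |f k (t + s) - f k s| ≤ M * (2 * C₀ + |t| ^ δ + 2 * |s| ^ δ) := by
    have h := Finset.sum_le_card_nsmul Finset.univ (fun k => |f k (t + s) - f k s|)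
      (2 * C₀ + |t| ^ δ + 2 * |s| ^ δ) (fun k _ => by
        linarith [abs_sub (f k (t + s)) (f k s), hf k (t + s), hf k s])
    simpa only [Finset.card_univ, Fintype.card_fin, nsmul_eq_mul] using h
  have h1 := mul_le_mul_of_nonneg_left hsum hb
  have h2 := hKx |t| (abs_nonneg t)
  linarith

/-- The passage from the exponent bound to the limit, along any filter on which `|s| → ∞`;
this treats both ends of the line at once. -/
lemma tendsto_logPlus_iSup_exp_div {l : Filter ℝ} (hl : Tendsto (fun s : ℝ => |s|) l atTop)
    (K B δ : ℝ) (hK : 0 ≤ K) (hB : 0 ≤ B) (hδ1 : δ < 1) (g : ℝ → ℝ → ℝ)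
    (hg : ∀ s t, g s t ≤ K + B * |s| ^ δ) :
    Tendsto (fun s : ℝ => |s|⁻¹ * max (Real.log (⨆ t : ℝ, Real.exp (g s t))) 0) l (𝓝 0) := by
  have hlim : Tendsto (fun x : ℝ => K * x⁻¹ + B * x ^ (-(1 - δ))) atTop (𝓝 0) := by
    simpa using (tendsto_inv_atTop_zero.const_mul K).add
      ((tendsto_rpow_neg_atTop (sub_pos.2 hδ1)).const_mul B)
  refine squeeze_zero' (Eventually.of_forall fun s => by positivity) ?_ (hlim.comp hl)
  filter_upwards [hl.eventually (eventually_gt_atTop 0)] with s hs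
  have hle : ∀ t, Real.exp (g s t) ≤ Real.exp (K + B * |s| ^ δ) :=
    fun t => Real.exp_le_exp.2 (hg s t)
  -- The value at `t = 0` makes the supremum positive, so that `log` is monotone there.
  have hpos : 0 < ⨆ t : ℝ, Real.exp (g s t) :=
    (Real.exp_pos (g s 0)).trans_le
      (le_ciSup (f := fun t => Real.exp (g s t)) ⟨_, Set.forall_mem_range.2 hle⟩ 0)
  have hlog : Real.log (⨆ t : ℝ, Real.exp (g s t)) ≤ K + B * |s| ^ δ :=
    (Real.log_le_iff_le_exp hpos).2 (ciSup_le hle)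
  have hmax : max (Real.log (⨆ t : ℝ, Real.exp (g s t))) 0 ≤ K + B * |s| ^ δ :=
    max_le hlog (by positivity)
  have hpow : |s| ^ (-(1 - δ)) = |s|⁻¹ * |s| ^ δ := by
    rw [← Real.rpow_neg_one, ← Real.rpow_add hs]; congr 1; ring
  calc |s|⁻¹ * max (Real.log (⨆ t : ℝ, Real.exp (g s t))) 0
      ≤ |s|⁻¹ * (K + B * |s| ^ δ) := by gcongr
    _ = K * |s|⁻¹ + B * |s| ^ (-(1 - δ)) := by rw [hpow]; ring

/-- Let `μ > 0`, `b ≥ 0`, `C₀ ≥ 0`, `δ ∈ (1/2, 1)` and `f = (f^1, …, f^M) : ℝ → ℝ^M` with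
`|f^k(t)| ≤ C₀ + |t|^δ` for all `t` and `k`. Then for every `s ∈ ℝ` the quantity
`C(s) := sup_{t ∈ ℝ} exp(−(μ/2)|t| + b ∑ₖ |f^k(t+s) − f^k(s)|)` is finite, and
`lim_{s → ±∞} |s|⁻¹ log⁺ C(s) = 0`. -/
theorem stmt5 {M : ℕ} (μ b C₀ δ : ℝ) (hμ : 0 < μ) (hb : 0 ≤ b) (hC₀ : 0 ≤ C₀)
    (hδ : δ ∈ Set.Ioo (1 / 2 : ℝ) 1) (f : Fin M → ℝ → ℝ)
    (hf : ∀ k, ∀ t : ℝ, |f k t| ≤ C₀ + |t| ^ δ) :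
    (∀ s : ℝ, BddAbove (Set.range fun t : ℝ =>
        Real.exp (-(μ / 2) * |t| + b * ∑ k, |f k (t + s) - f k s|))) ∧
    Tendsto (fun s : ℝ => |s|⁻¹ *
        max (Real.log (⨆ t : ℝ,
          Real.exp (-(μ / 2) * |t| + b * ∑ k, |f k (t + s) - f k s|))) 0)
      atTop (𝓝 0) ∧
    Tendsto (fun s : ℝ => |s|⁻¹ *
        max (Real.log (⨆ t : ℝ,
          Real.exp (-(μ / 2) * |t| + b * ∑ k, |f k (t + s) - f k s|))) 0)
      atBot (𝓝 0) := by
  obtain ⟨K, B, hK, hB, hle⟩ := exists_exponent_le μ b C₀ δ hμ hb hC₀ hδ f hf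
  exact ⟨fun s => ⟨Real.exp (K + B * |s| ^ δ),
      Set.forall_mem_range.2 fun t => Real.exp_le_exp.2 (hle s t)⟩,
    tendsto_logPlus_iSup_exp_div tendsto_abs_atTop_atTop K B δ hK hB hδ.2 _ hle,
    tendsto_logPlus_iSup_exp_div tendsto_abs_atBot_atTop K B δ hK hB hδ.2 _ hle⟩
end
end

section
/- Let a < 0 and 0 < 2Λ < −a. Then for every t ∈ ℝ, e^{−2Λ|t|} · (∫_{−∞}^t e^{(a/2)(t−s)} e^{Λ|s|} ds)² ≤ 8/(a + 2Λ)² + 8/(a − 2Λ)². -/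
open MeasureTheory

/-!
Since `|s| ≤ |t| + (t - s)` for `s ≤ t`, the integrand is at most
`exp (Λ|t|) * exp ((a/2 + Λ)(t - s))`. As `a/2 + Λ < 0`, integrating over `s ≤ t` bounds the
integral by `exp (Λ|t|) * (-2 / (a + 2Λ))`. The square of this, times the weight
`exp (-2Λ|t|)`, is `4 / (a + 2Λ)²`, which is below the first term of the claimed bound.
-/

/-- For `a < 0` and `0 < 2Λ < −a`, for every `t ∈ ℝ`,
`e^{−2Λ|t|} (∫_{−∞}^t e^{(a/2)(t−s)} e^{Λ|s|} ds)² ≤ 8/(a+2Λ)² + 8/(a−2Λ)²`. -/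
theorem stmt15 (a Λ : ℝ) (ha : a < 0) (hΛ0 : 0 < 2 * Λ) (hΛ : 2 * Λ < -a) :
    ∀ t : ℝ,
      Real.exp (-2 * Λ * |t|) *
          (∫ s in Set.Iic t, Real.exp (a / 2 * (t - s)) * Real.exp (Λ * |s|)) ^ 2 ≤
        8 / (a + 2 * Λ) ^ 2 + 8 / (a - 2 * Λ) ^ 2 := by
  intro t
  have hc : 0 < -(a / 2 + Λ) := by linarith
  set c := -(a / 2 + Λ) with hcdef
  have hI0 : 0 ≤ ∫ s in Set.Iic t, Real.exp (a / 2 * (t - s)) * Real.exp (Λ * |s|) :=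
    integral_nonneg fun s => by positivity
  have hI : ∫ s in Set.Iic t, Real.exp (a / 2 * (t - s)) * Real.exp (Λ * |s|) ≤
      Real.exp (Λ * |t|) / c := by
    calc _ ≤ ∫ s in Set.Iic t, Real.exp (Λ * |t| - c * t) * Real.exp (c * s) := by
          refine integral_mono_of_nonneg (Filter.Eventually.of_forall fun s => by positivity)
            ((integrableOn_exp_mul_Iic hc t).const_mul _) ?_
          filter_upwards [ae_restrict_mem measurableSet_Iic] with s hs
          have hs' : s ≤ t := hs
          have habs : |s| ≤ |t| + (t - s) :=
            abs_le.2 ⟨by linarith [neg_abs_le t], by linarith [le_abs_self t]⟩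
          have := mul_le_mul_of_nonneg_left habs (by linarith : 0 ≤ Λ)
          simp only [← Real.exp_add]
          apply Real.exp_le_exp.2
          rw [hcdef]
          linarith
      _ = Real.exp (Λ * |t|) / c := by
          rw [integral_const_mul, integral_exp_mul_Iic hc, ← mul_div_assoc, ← Real.exp_add]
          congr 2
          ring
  have hexp : Real.exp (-2 * Λ * |t|) * Real.exp (Λ * |t|) ^ 2 = 1 := by
    rw [← Real.exp_nat_mul, ← Real.exp_add, Real.exp_eq_one_iff]
    push_cast
    ring
  calc _ ≤ Real.exp (-2 * Λ * |t|) * (Real.exp (Λ * |t|) / c) ^ 2 := by gcongr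
    _ = 4 / (a + 2 * Λ) ^ 2 := by
        rw [div_pow, ← mul_div_assoc, hexp, show a + 2 * Λ = -(2 * c) by rw [hcdef]; ring]
        field_simp
        norm_num
    _ ≤ 8 / (a + 2 * Λ) ^ 2 := by gcongr; norm_num
    _ ≤ _ := le_add_of_nonneg_right (by positivity)
end

section
/- Let w : ℝ → ℝ be continuous with |w(t)| ≤ C₀ + |t|^δ for all t, for some C₀ ≥ 0 and δ ∈ (0, 1). Define Y_w(t) := ∫_{−∞}^t e^{−(t−s) + 10(w(t) − w(s))} cos s ds. Then: (a) the integral converges absolutely for every t, so Y_w is well-defined; (b) for all s ≤ t, Y_w(t) = e^{−(t−s) + 10(w(t) − w(s))} Y_w(s) + ∫_s^t e^{−(t−r) + 10(w(t) − w(r))} cos r dr; (c) with the shifted path w̃(r) := w(r + 2π) − w(2π), one has Y_{w̃}(t) = Y_w(t + 2π) for all t, i.e. Y is a random periodic path of period 2π. -/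
/-! Since `δ < 1`, the growth bound makes `10 * |w s|` at most `10 * C₀ + |s| / 2` once `s` is
sufficiently negative, so the integrand defining `Ypath w t` is `O(exp (s / 2))` at `-∞`; being
continuous, it is integrable on `Iic t`. The semiflow property splits `Iic t` at `s` and uses that
the weight `exp (-(t - s) + 10 * (w t - w s))` is a multiplicative cocycle. Periodicity is the
change of variables `r ↦ r + 2π`: the increments of the shifted path are those of `w` at the
translated times, and `cos` has period `2π`. -/

open MeasureTheory Real

noncomputable section

/-- The pathwise candidate random periodic solution
`Y_w(t) := ∫_{−∞}^t e^{−(t−s) + 10(w(t) − w(s))} cos s ds`. -/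
def Ypath (w : ℝ → ℝ) (t : ℝ) : ℝ :=
  ∫ s in Set.Iic t, Real.exp (-(t - s) + 10 * (w t - w s)) * Real.cos s

open Filter Topology Asymptotics Set

/-- A sublinear power is absorbed by any linear rate; the constants are those needed to leave
the decay rate `1 / 2` from the drift `-1` and the noise intensity `10`. -/
lemma eventually_ten_mul_abs_rpow_le {δ : ℝ} (hδ : δ < 1) :
    ∀ᶠ s : ℝ in atBot, 10 * |s| ^ δ ≤ |s| / 2 := by
  have h := (tendsto_rpow_neg_atTop (sub_pos.2 hδ)).eventually
    (gt_mem_nhds (show (0 : ℝ) < 1 / 20 by norm_num))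
  filter_upwards [tendsto_abs_atBot_atTop.eventually h, eventually_lt_atBot 0] with s hs hs0
  have hpos : 0 < |s| := abs_pos.2 hs0.ne
  have e : |s| ^ δ = |s| ^ (-(1 - δ)) * |s| := by
    rw [← Real.rpow_add_one hpos.ne']
    ring_nf
  rw [e]
  nlinarith

lemma integrableOn_Ypath {w : ℝ → ℝ} (hw : Continuous w) {C₀ δ : ℝ} (hδ : δ < 1)
    (hgrowth : ∀ t : ℝ, |w t| ≤ C₀ + |t| ^ δ) (t : ℝ) :
    IntegrableOn (fun s => Real.exp (-(t - s) + 10 * (w t - w s)) * Real.cos s) (Iic t) := by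
  have hcont : Continuous fun s => Real.exp (-(t - s) + 10 * (w t - w s)) * Real.cos s := by
    fun_prop
  refine (hcont.locallyIntegrable.locallyIntegrableOn _).integrableOn_of_isBigO_atBot
    (g := fun s => Real.exp (1 / 2 * s)) ?_
    ⟨Iic t, Iic_mem_atBot t, integrableOn_exp_mul_Iic (by norm_num) t⟩
  refine IsBigO.of_bound (Real.exp (-t + 10 * w t + 10 * C₀)) ?_
  filter_upwards [eventually_ten_mul_abs_rpow_le hδ, eventually_lt_atBot 0] with s hs hs0
  rw [norm_mul, Real.norm_of_nonneg (Real.exp_pos _).le, Real.norm_of_nonneg (Real.exp_pos _).le,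
    ← Real.exp_add]
  refine (mul_le_of_le_one_right (Real.exp_pos _).le (Real.abs_cos_le_one s)).trans ?_
  refine Real.exp_le_exp.2 ?_
  have h1 := neg_abs_le (w s)
  have h2 := hgrowth s
  rw [abs_of_neg hs0] at hs h2
  linarith

/-- For a continuous path `w` with `|w(t)| ≤ C₀ + |t|^δ` (`0 < δ < 1`):
(a) the defining integral of `Y_w` converges absolutely;
(b) `Y_w(t) = e^{−(t−s)+10(w(t)−w(s))} Y_w(s) + ∫_s^t e^{−(t−r)+10(w(t)−w(r))} cos r dr`
for all `s ≤ t` (semiflow property);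
(c) with `w̃(r) := w(r + 2π) − w(2π)`, `Y_{w̃}(t) = Y_w(t + 2π)` for all `t`
(random periodicity of period `2π`). -/
theorem stmt18 (w : ℝ → ℝ) (hw : Continuous w) (C₀ δ : ℝ) (hC₀ : 0 ≤ C₀)
    (hδ : δ ∈ Set.Ioo (0 : ℝ) 1) (hgrowth : ∀ t : ℝ, |w t| ≤ C₀ + |t| ^ δ) :
    (∀ t : ℝ, IntegrableOn
        (fun s => Real.exp (-(t - s) + 10 * (w t - w s)) * Real.cos s) (Set.Iic t)) ∧
    (∀ s t : ℝ, s ≤ t →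
      Ypath w t = Real.exp (-(t - s) + 10 * (w t - w s)) * Ypath w s +
        ∫ r in s..t, Real.exp (-(t - r) + 10 * (w t - w r)) * Real.cos r) ∧
    (∀ t : ℝ, Ypath (fun r => w (r + 2 * π) - w (2 * π)) t = Ypath w (t + 2 * π)) := by
  have hint := integrableOn_Ypath hw hδ.2 hgrowth
  refine ⟨hint, fun s t hst => ?_, fun t => ?_⟩
  · have hcocycle : Real.exp (-(t - s) + 10 * (w t - w s)) * Ypath w s =
        ∫ r in Iic s, Real.exp (-(t - r) + 10 * (w t - w r)) * Real.cos r := by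
      rw [Ypath, ← integral_const_mul]
      congr 1 with r
      rw [← mul_assoc, ← Real.exp_add]
      ring_nf
    rw [hcocycle, ← intervalIntegral.integral_Iic_sub_Iic
      ((hint t).mono_set (Iic_subset_Iic.2 hst)) (hint t), Ypath]
    ring
  · have h := (measurePreserving_add_right volume (2 * π)).setIntegral_preimage_emb
      (measurableEmbedding_addRight (2 * π))
      (fun s => Real.exp (-(t + 2 * π - s) + 10 * (w (t + 2 * π) - w s)) * Real.cos s)
      (Iic (t + 2 * π))
    rw [Ypath, Ypath, ← h]
    have hpre : (fun x => x + 2 * π) ⁻¹' Iic (t + 2 * π) = Iic t := by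
      ext x
      simp
    rw [hpre]
    congr 1 with s
    rw [Real.cos_add_two_pi]
    ring_nf
end
end
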